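/- Let ψ : ℕ → ℂ. Then ψ belongs to the class 𝒞′ if and only if there exist a complex Borel measure μ on the open unit disc 𝔻 and constants c₊, c₋ ∈ ℂ such that ψ(n) = c₊ + (−1)ⁿ c₋ + ∫_𝔻 sⁿ dμ(s) for all n ∈ ℕ and ∫_𝔻 |1−s²|/(1−|s|²) d|μ|(s) < ∞. Moreover, for ψ ∈ 𝒞′ the measure μ and the constants can be chosen so that |c₊| + |c₋| + ∫_𝔻 |1−s²|/(1−|s|²) d|μ|(s) ≤ (8/π)·‖ψ‖_{𝒞′}. -/

import Mathlib

open MeasureTheory Filter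

noncomputable section

/-- The Hilbert space `ℓ²(ℕ; ℂ)`. -/
abbrev ell2 : Type := lp (fun _ : ℕ => ℂ) 2

/-- A matrix `h : ℕ → ℕ → ℂ` is of trace class if it admits a representation
`h i j = ∑ₖ xₖ(i) · conj (yₖ(j))` with `xₖ, yₖ ∈ ℓ²(ℕ; ℂ)` and `∑ₖ ‖xₖ‖₂·‖yₖ‖₂ < ∞`. -/
def IsTraceClass (h : ℕ → ℕ → ℂ) : Prop :=
  ∃ x y : ℕ → ell2,
    (Summable fun k => ‖x k‖ * ‖y k‖) ∧
    ∀ i j, h i j = ∑' k, (x k : ℕ → ℂ) i * (starRingEnd ℂ) ((y k : ℕ → ℂ) j)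

/-- The trace norm of a matrix: the infimum of `∑ₖ ‖xₖ‖₂·‖yₖ‖₂` over all representations
`h i j = ∑ₖ xₖ(i) · conj (yₖ(j))` as above. -/
def traceNorm (h : ℕ → ℕ → ℂ) : ℝ :=
  sInf { c : ℝ | ∃ x y : ℕ → ell2,
    (Summable fun k => ‖x k‖ * ‖y k‖) ∧
    (∀ i j, h i j = ∑' k, (x k : ℕ → ℂ) i * (starRingEnd ℂ) ((y k : ℕ → ℂ) j)) ∧
    c = ∑' k, ‖x k‖ * ‖y k‖ }

/-- The Hankel matrix `ĥ_φ(i,j) = φ(i+j) − φ(i+j+2)`. -/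
def hankelHat (φ : ℕ → ℂ) : ℕ → ℕ → ℂ := fun i j => φ (i+j) - φ (i+j+2)

/-- The class `𝒞′`: the Hankel matrix `ĥ_φ` is of trace class. -/
def MemCp (φ : ℕ → ℂ) : Prop := IsTraceClass (hankelHat φ)

/-- For `φ ∈ 𝒞′`, the constant `c₁` in the decomposition `φ(n) = c₁ + (−1)ⁿ c₂ + ψ(n)`,
`ψ(n) → 0`: it equals `(lim φ(2n) + lim φ(2n+1))/2`. -/
def cOne (φ : ℕ → ℂ) : ℂ :=
  (limUnder atTop (fun n => φ (2*n)) + limUnder atTop (fun n => φ (2*n+1))) / 2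

/-- For `φ ∈ 𝒞′`, the constant `c₂` in the decomposition `φ(n) = c₁ + (−1)ⁿ c₂ + ψ(n)`,
`ψ(n) → 0`: it equals `(lim φ(2n) − lim φ(2n+1))/2`. -/
def cTwo (φ : ℕ → ℂ) : ℂ :=
  (limUnder atTop (fun n => φ (2*n)) - limUnder atTop (fun n => φ (2*n+1))) / 2

/-- The norm `‖φ‖_{𝒞′} = |c₁| + |c₂| + ‖ĥ_φ‖₁`. -/
def CpNorm (φ : ℕ → ℂ) : ℝ := ‖cOne φ‖ + ‖cTwo φ‖ + traceNorm (hankelHat φ)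

/-!
Put `aₙ = ψ(n) - ψ(n+2)`, so that `ĥ_ψ(i,j) = aᵢ₊ⱼ`, and `B(s) = ∑ₙ (n+1)(n+2) aₙ s̄ⁿ`. If
`aᵢ₊ⱼ = ∑ₖ xₖ(i) conj(yₖ(j))`, then comparing coefficients in the identity
`(1-z)^(-3/2) (1-z)^(-3/2) = (1-z)^(-3)` gives `B = (8/π) ∑ₖ Xₖ Yₖ` with `‖Xₖ‖ ≤ √π ‖xₖ‖` and
`‖Yₖ‖ ≤ √π ‖yₖ‖` in `L²(𝔻)`, so Cauchy–Schwarz yields `∫ |B| ≤ 8 ‖ĥ_ψ‖₁`. By orthogonality of the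
monomials for the weight `1 - |s|²`, `∫ B(s) (1-|s|²) sⁿ = π aₙ`; hence the measure with density
`B(s) (1-|s|²) / (π (1-s²))` has moments `Mₙ → 0` with `Mₙ - Mₙ₊₂ = aₙ`, and the `2`-periodic
sequence `ψ - M` is `c₊ + (-1)ⁿ c₋`.

Conversely, `ĥ_ψ(i,j) = ∫ (1-s²) sⁱ⁺ʲ dμ(s)` is a Gram matrix of functions `Fᵢ ∈ L²(|μ|)` with
`|Fᵢ|² = |1-s²| |s|²ⁱ`, and `∑ᵢ ‖Fᵢ‖² = ∫ |1-s²|/(1-|s|²) d|μ|(s)` is finite.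
-/

open scoped ENNReal Topology ComplexConjugate

section GammaRatio

open Finset

/-- The coefficients `Γ(n + α) / n!`; up to the factor `Γ(α)` these are the Taylor coefficients of
`(1 - z) ^ (-α)`. -/
def gammaRatio (α : ℝ) (n : ℕ) : ℝ := Real.Gamma (n + α) / Real.Gamma (n + 1)

variable {α β : ℝ}

lemma gammaRatio_pos (hα : 0 < α) (n : ℕ) : 0 < gammaRatio α n :=
  div_pos (Real.Gamma_pos_of_pos (by positivity)) (Real.Gamma_pos_of_pos (by positivity))

lemma gammaRatio_zero (α : ℝ) : gammaRatio α 0 = Real.Gamma α := by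
  simp [gammaRatio]

lemma add_one_mul_gammaRatio_succ (hα : 0 < α) (n : ℕ) :
    (n + 1) * gammaRatio α (n + 1) = (n + α) * gammaRatio α n := by
  have hΓ : Real.Gamma ((n : ℝ) + 1) ≠ 0 := (Real.Gamma_pos_of_pos (by positivity)).ne'
  have hα' : ((n + 1 : ℕ) : ℝ) + α = (n + α) + 1 := by push_cast; ring
  rw [gammaRatio, gammaRatio, hα', Nat.cast_succ, Real.Gamma_add_one (by positivity),
    Real.Gamma_add_one (by positivity)]
  field_simp

lemma gammaRatio_one_add_le_rpow {θ : ℝ} (hθ₀ : 0 < θ) (hθ₁ : θ < 1) (n : ℕ) :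
    gammaRatio (1 + θ) n ≤ ((n : ℝ) + 1) ^ θ := by
  have hn : (0 : ℝ) < n + 1 := by positivity
  have hΓ : 0 < Real.Gamma ((n : ℝ) + 1) := Real.Gamma_pos_of_pos hn
  have hlogconvex := Real.Gamma_mul_add_mul_le_rpow_Gamma_mul_rpow_Gamma hn
    (add_pos hn one_pos) (sub_pos.2 hθ₁) hθ₀ (sub_add_cancel 1 θ)
  rw [gammaRatio, div_le_iff₀ hΓ]
  calc Real.Gamma (n + (1 + θ))
      = Real.Gamma ((1 - θ) * (n + 1) + θ * (n + 1 + 1)) := by ring_nf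
    _ ≤ Real.Gamma (n + 1) ^ (1 - θ) * Real.Gamma (n + 1 + 1) ^ θ := hlogconvex
    _ = ((n : ℝ) + 1) ^ θ * (Real.Gamma (n + 1) ^ (1 - θ) * Real.Gamma (n + 1) ^ θ) := by
      rw [Real.Gamma_add_one hn.ne', Real.mul_rpow hn.le hΓ.le]; ring
    _ = ((n : ℝ) + 1) ^ θ * Real.Gamma (n + 1) := by
      rw [← Real.rpow_add hΓ, sub_add_cancel, Real.rpow_one]

lemma add_one_mul_sum_antidiagonal_succ {R : Type*} [CommSemiring R] {a b : R} {u v : ℕ → R}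
    (hu : ∀ n : ℕ, (n + 1) * u (n + 1) = (n + a) * u n)
    (hv : ∀ n : ℕ, (n + 1) * v (n + 1) = (n + b) * v n) (n : ℕ) :
    (n + 1) * ∑ p ∈ antidiagonal (n + 1), u p.1 * v p.2 =
      (n + (a + b)) * ∑ p ∈ antidiagonal n, u p.1 * v p.2 := by
  calc (n + 1) * ∑ p ∈ antidiagonal (n + 1), u p.1 * v p.2
      = ∑ p ∈ antidiagonal (n + 1), p.1 * (u p.1 * v p.2) +
          ∑ p ∈ antidiagonal (n + 1), p.2 * (u p.1 * v p.2) := by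
        rw [← sum_add_distrib, mul_sum]
        refine sum_congr rfl fun p hp => ?_
        have hp' : (n : R) + 1 = p.1 + p.2 := by
          rw [← Nat.cast_add, mem_antidiagonal.1 hp, Nat.cast_succ]
        rw [hp', add_mul]
    _ = ∑ p ∈ antidiagonal n, (p.1 + a) * (u p.1 * v p.2) +
          ∑ p ∈ antidiagonal n, (p.2 + b) * (u p.1 * v p.2) := by
        rw [Nat.sum_antidiagonal_succ, Nat.sum_antidiagonal_succ']
        simp only [Nat.cast_zero, zero_mul, zero_add, Nat.cast_succ]
        congr 1 <;> refine sum_congr rfl fun p _ => ?_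
        · rw [← mul_assoc, hu, mul_assoc]
        · rw [mul_left_comm, hv, mul_left_comm]
    _ = (n + (a + b)) * ∑ p ∈ antidiagonal n, u p.1 * v p.2 := by
        rw [← sum_add_distrib, mul_sum]
        refine sum_congr rfl fun p hp => ?_
        rw [← mem_antidiagonal.1 hp]
        push_cast
        ring

/-- The identity `(1 - z) ^ (-α) * (1 - z) ^ (-β) = (1 - z) ^ (-(α + β))`, read coefficientwise. -/
lemma sum_antidiagonal_gammaRatio_mul_gammaRatio (hα : 0 < α) (hβ : 0 < β) (n : ℕ) :
    ∑ p ∈ antidiagonal n, gammaRatio α p.1 * gammaRatio β p.2 =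
      Real.Gamma α * Real.Gamma β / Real.Gamma (α + β) * gammaRatio (α + β) n := by
  induction n with
  | zero =>
    have hΓ : Real.Gamma (α + β) ≠ 0 := (Real.Gamma_pos_of_pos (by positivity)).ne'
    simp only [Nat.antidiagonal_zero, sum_singleton, gammaRatio_zero]
    field_simp
  | succ n ih =>
    refine mul_left_cancel₀ (Nat.cast_add_one_ne_zero (R := ℝ) n) ?_
    rw [add_one_mul_sum_antidiagonal_succ (add_one_mul_gammaRatio_succ hα)
      (add_one_mul_gammaRatio_succ hβ), ih, mul_left_comm,
      ← add_one_mul_gammaRatio_succ (add_pos hα hβ), mul_left_comm]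

lemma gammaRatio_three (n : ℕ) : gammaRatio 3 n = (n + 1) * (n + 2) := by
  have hΓ : Real.Gamma ((n : ℝ) + 1) ≠ 0 := (Real.Gamma_pos_of_pos (by positivity)).ne'
  have h3 : (n : ℝ) + 3 = n + 1 + 1 + 1 := by ring
  rw [gammaRatio, h3, Real.Gamma_add_one (by positivity), Real.Gamma_add_one (by positivity)]
  field_simp
  ring

lemma sq_gammaRatio_three_halves_le (n : ℕ) : gammaRatio (3 / 2) n ^ 2 ≤ n + 1 := by
  have hle : gammaRatio (3 / 2) n ≤ √(n + 1) := by
    rw [Real.sqrt_eq_rpow, show (3 / 2 : ℝ) = 1 + 1 / 2 by norm_num]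
    exact gammaRatio_one_add_le_rpow (by norm_num) (by norm_num) n
  exact (Real.le_sqrt (gammaRatio_pos (by norm_num) n).le (by positivity)).1 hle

lemma sum_antidiagonal_gammaRatio_three_halves (n : ℕ) :
    ∑ p ∈ antidiagonal n, gammaRatio (3 / 2) p.1 * gammaRatio (3 / 2) p.2 =
      Real.pi / 8 * ((n + 1) * (n + 2)) := by
  have hΓ₃ : Real.Gamma 3 = 2 := by
    rw [show (3 : ℝ) = (2 : ℕ) + 1 by norm_num, Real.Gamma_nat_eq_factorial]
    norm_num [Nat.factorial]
  have hΓ : Real.Gamma (3 / 2) = √Real.pi / 2 := by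
    rw [show (3 / 2 : ℝ) = 1 / 2 + 1 by norm_num, Real.Gamma_add_one (by norm_num),
      Real.Gamma_one_half_eq]
    ring
  rw [sum_antidiagonal_gammaRatio_mul_gammaRatio (by norm_num) (by norm_num),
    show (3 / 2 + 3 / 2 : ℝ) = 3 by norm_num, gammaRatio_three, hΓ₃, hΓ, div_mul_div_comm,
    Real.mul_self_sqrt Real.pi_pos.le]
  ring

end GammaRatio

local notation "𝔻" => Metric.ball (0 : ℂ) 1

section DiscArea

/-- Area (Lebesgue) measure on the open unit disc. -/
def discArea : Measure 𝔻 := volume.comap Subtype.val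

lemma norm_coe_lt_one (s : 𝔻) : ‖(s : ℂ)‖ < 1 := mem_ball_zero_iff.1 s.2

lemma one_sub_norm_sq_pos (s : 𝔻) : 0 < 1 - ‖(s : ℂ)‖ ^ 2 :=
  sub_pos.2 (pow_lt_one₀ (norm_nonneg _) (norm_coe_lt_one s) two_ne_zero)

lemma integral_discArea {E : Type*} [NormedAddCommGroup E] [NormedSpace ℝ E] (f : ℂ → E) :
    ∫ s : 𝔻, f s ∂discArea = ∫ z in 𝔻, f z :=
  integral_subtype_comap measurableSet_ball f

instance : IsFiniteMeasure discArea := by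
  refine ⟨?_⟩
  rw [discArea, comap_subtype_coe_apply measurableSet_ball, Set.image_univ, Subtype.range_coe]
  exact measure_ball_lt_top

lemma integrable_discArea_of_continuous_of_bound {f : 𝔻 → ℂ} {C : ℝ} (hf : Continuous f)
    (hC : ∀ s, ‖f s‖ ≤ C) : Integrable f discArea :=
  .of_bound hf.aestronglyMeasurable C (ae_of_all _ hC)

lemma norm_pow_mul_conj_pow_le_one (n m : ℕ) (s : 𝔻) : ‖(s : ℂ) ^ n * conj (s : ℂ) ^ m‖ ≤ 1 := by
  rw [norm_mul, norm_pow, norm_pow, RCLike.norm_conj, ← pow_add]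
  exact pow_le_one₀ (norm_nonneg _) (norm_coe_lt_one s).le

lemma integrable_pow_mul_conj_pow (n m : ℕ) :
    Integrable (fun s : 𝔻 => (s : ℂ) ^ n * conj (s : ℂ) ^ m) discArea :=
  integrable_discArea_of_continuous_of_bound (by fun_prop) (norm_pow_mul_conj_pow_le_one n m)

lemma integral_norm_pow_discArea (N : ℕ) :
    ∫ s : 𝔻, ‖(s : ℂ)‖ ^ N ∂discArea = 2 * Real.pi / (N + 2) := by
  have hindicator : ∀ z : ℂ, (𝔻).indicator (fun z => ‖z‖ ^ N) z =
      (Set.Iio 1).indicator (fun r : ℝ => r ^ N) ‖z‖ := fun z => by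
    simp only [Set.indicator, mem_ball_zero_iff, Set.mem_Iio]
  have hradial : ∫ r in Set.Ioi (0 : ℝ), r ^ (Module.finrank ℝ ℂ - 1) •
      (Set.Iio 1).indicator (fun r : ℝ => r ^ N) r = 1 / (N + 2) := by
    calc ∫ r in Set.Ioi (0 : ℝ), r ^ (Module.finrank ℝ ℂ - 1) •
          (Set.Iio 1).indicator (fun r : ℝ => r ^ N) r
        = ∫ r in Set.Ioi (0 : ℝ), (Set.Iio 1).indicator (fun r : ℝ => r ^ (N + 1)) r := by
          refine integral_congr_ae (ae_of_all _ fun r => ?_)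
          simp only [Complex.finrank_real_complex, Set.indicator, smul_eq_mul]
          split_ifs <;> ring
      _ = ∫ r in (0 : ℝ)..1, r ^ (N + 1) := by
          rw [setIntegral_indicator measurableSet_Iio, Set.Ioi_inter_Iio,
            ← integral_Ioc_eq_integral_Ioo, ← intervalIntegral.integral_of_le zero_le_one]
      _ = 1 / (N + 2) := by
          rw [integral_pow]
          push_cast
          ring
  rw [integral_discArea (fun z => ‖z‖ ^ N), ← integral_indicator measurableSet_ball]
  simp_rw [hindicator]
  rw [integral_fun_norm_addHaar (volume : Measure ℂ), hradial, measureReal_def,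
    Complex.volume_ball, Complex.finrank_real_complex]
  simp only [ENNReal.ofReal_one, one_pow, one_mul, ENNReal.coe_toReal, NNReal.coe_real_pi,
    smul_eq_mul, nsmul_eq_mul, Nat.cast_ofNat]
  ring

lemma integral_discArea_rotation (u : Circle) (f : ℂ → ℂ) :
    ∫ s : 𝔻, f (u * s) ∂discArea = ∫ s : 𝔻, f s ∂discArea := by
  have hball : rotation u ⁻¹' 𝔻 = 𝔻 := by
    ext z
    rw [Set.mem_preimage, mem_ball_zero_iff, mem_ball_zero_iff, LinearIsometryEquiv.norm_map]
  have hrotation := (rotation u).measurePreserving.setIntegral_preimage_emb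
    (rotation u).toHomeomorph.measurableEmbedding f 𝔻
  rwa [hball, ← integral_discArea, ← integral_discArea] at hrotation

lemma exists_circle_pow_mul_conj_pow_eq_neg_one {n m : ℕ} (h : n ≠ m) :
    ∃ u : Circle, (u : ℂ) ^ n * conj (u : ℂ) ^ m = -1 := by
  have hnm : (n : ℂ) - m ≠ 0 := sub_ne_zero.2 (Nat.cast_injective.ne h)
  refine ⟨Circle.exp (Real.pi / (n - m)), ?_⟩
  rw [Circle.coe_exp, ← Complex.exp_conj, ← Complex.exp_nat_mul, ← Complex.exp_nat_mul,
    ← Complex.exp_add, ← Complex.exp_pi_mul_I]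
  simp only [map_mul, Complex.conj_ofReal, Complex.conj_I]
  push_cast
  congr 1
  field_simp
  ring

lemma integral_pow_mul_conj_pow_of_ne {n m : ℕ} (h : n ≠ m) :
    ∫ s : 𝔻, (s : ℂ) ^ n * conj (s : ℂ) ^ m ∂discArea = 0 := by
  obtain ⟨u, hu⟩ := exists_circle_pow_mul_conj_pow_eq_neg_one h
  have hrotation := integral_discArea_rotation u fun z => z ^ n * conj z ^ m
  have hneg : ∀ z : ℂ, (u * z) ^ n * conj (u * z) ^ m = -(z ^ n * conj z ^ m) := fun z => by
    rw [map_mul, mul_pow, mul_pow, mul_mul_mul_comm, hu, neg_one_mul]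
  simp only [hneg, integral_neg] at hrotation
  exact self_eq_neg.1 hrotation.symm

lemma integral_pow_mul_conj_pow (n m : ℕ) :
    ∫ s : 𝔻, (s : ℂ) ^ n * conj (s : ℂ) ^ m ∂discArea =
      if n = m then (Real.pi : ℂ) / (n + 1) else 0 := by
  split_ifs with h
  · have hnorm : ∀ s : 𝔻, (s : ℂ) ^ n * conj (s : ℂ) ^ m = ((‖(s : ℂ)‖ ^ (2 * n) : ℝ) : ℂ) :=
      fun s => by rw [← h, ← mul_pow, Complex.mul_conj', ← pow_mul, Complex.ofReal_pow]
    simp_rw [hnorm]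
    rw [integral_complex_ofReal, integral_norm_pow_discArea]
    push_cast
    field_simp
  · exact integral_pow_mul_conj_pow_of_ne h

lemma integral_pow_mul_conj_pow_mul_one_sub_norm_sq (n m : ℕ) :
    ∫ s : 𝔻, (s : ℂ) ^ n * conj (s : ℂ) ^ m * ((1 - ‖(s : ℂ)‖ ^ 2 : ℝ) : ℂ) ∂discArea =
      if n = m then (Real.pi : ℂ) / ((n + 1) * (n + 2)) else 0 := by
  have hsplit : ∀ s : 𝔻, (s : ℂ) ^ n * conj (s : ℂ) ^ m * ((1 - ‖(s : ℂ)‖ ^ 2 : ℝ) : ℂ) =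
      (s : ℂ) ^ n * conj (s : ℂ) ^ m - (s : ℂ) ^ (n + 1) * conj (s : ℂ) ^ (m + 1) := fun s => by
    push_cast
    rw [← Complex.mul_conj']
    ring
  simp_rw [hsplit]
  rw [integral_sub (integrable_pow_mul_conj_pow n m) (integrable_pow_mul_conj_pow _ _),
    integral_pow_mul_conj_pow, integral_pow_mul_conj_pow]
  simp only [Nat.add_right_cancel_iff]
  split_ifs
  · have : (n : ℂ) + 2 ≠ 0 := by exact_mod_cast (n + 1).succ_ne_zero
    push_cast
    rw [add_assoc, one_add_one_eq_two]
    field_simp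
    ring
  · exact sub_zero 0

end DiscArea

section ConjSeries

open Finset

lemma integral_norm_sq_sum_of_pairwise {α ι : Type*} [MeasurableSpace α] {μ : Measure α}
    {F : ι → α → ℂ} (hF : ∀ i, MemLp (F i) 2 μ)
    (horth : Pairwise fun i j => ∫ x, F i x * conj (F j x) ∂μ = 0) (t : Finset ι) :
    ∫ x, ‖∑ i ∈ t, F i x‖ ^ 2 ∂μ = ∑ i ∈ t, ∫ x, ‖F i x‖ ^ 2 ∂μ := by
  have hint : ∀ i j, Integrable (fun x => F i x * conj (F j x)) μ := fun i j =>
    (hF i).integrable_mul (hF j).star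
  apply Complex.ofReal_injective
  calc ((∫ x, ‖∑ i ∈ t, F i x‖ ^ 2 ∂μ : ℝ) : ℂ)
      = ∫ x, ∑ i ∈ t, ∑ j ∈ t, F i x * conj (F j x) ∂μ := by
        rw [← integral_complex_ofReal]
        refine integral_congr_ae (ae_of_all _ fun x => ?_)
        simp only [Complex.ofReal_pow, ← Complex.mul_conj', map_sum, sum_mul_sum]
    _ = ∑ i ∈ t, ∑ j ∈ t, ∫ x, F i x * conj (F j x) ∂μ := by
        rw [integral_finsetSum _ fun i _ => integrable_finsetSum _ fun j _ => hint i j]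
        exact sum_congr rfl fun i _ => integral_finsetSum _ fun j _ => hint i j
    _ = ∑ i ∈ t, ∫ x, F i x * conj (F i x) ∂μ :=
        sum_congr rfl fun i hi =>
          sum_eq_single_of_mem i hi fun j _ hji => horth hji.symm
    _ = ((∑ i ∈ t, ∫ x, ‖F i x‖ ^ 2 ∂μ : ℝ) : ℂ) := by
        simp only [Complex.ofReal_sum, ← integral_complex_ofReal, Complex.ofReal_pow,
          Complex.mul_conj']

/-- The antiholomorphic power series `∑ₙ cₙ s̄ⁿ` on the unit disc; it takes the junk value `0` where
it does not converge absolutely. -/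
def conjSeries (c : ℕ → ℂ) (s : 𝔻) : ℂ := ∑' n, c n * conj (s : ℂ) ^ n

lemma summable_add_one_mul_add_two_mul_norm_pow (s : 𝔻) :
    Summable fun n : ℕ => ((n : ℝ) + 1) * (n + 2) * ‖(s : ℂ)‖ ^ n := by
  have hs : ‖‖(s : ℂ)‖‖ < 1 := by simpa only [norm_norm] using norm_coe_lt_one s
  have hpow := fun k => summable_pow_mul_geometric_of_norm_lt_one (R := ℝ) k hs
  exact (((hpow 2).add ((hpow 1).mul_left 3)).add ((hpow 0).mul_left 2)).congr fun n => by ring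

lemma summable_norm_mul_conj_pow_of_norm_le {c : ℕ → ℂ} {C : ℝ}
    (hc : ∀ n : ℕ, ‖c n‖ ≤ C * ((n + 1) * (n + 2))) (s : 𝔻) :
    Summable fun n => ‖c n * conj (s : ℂ) ^ n‖ := by
  refine .of_nonneg_of_le (fun _ => norm_nonneg _) (fun n => ?_)
    ((summable_add_one_mul_add_two_mul_norm_pow s).mul_left C)
  rw [norm_mul, norm_pow, RCLike.norm_conj, ← mul_assoc C]
  gcongr
  exact hc n

variable {c d : ℕ → ℂ}

lemma conjSeries_mul_conjSeries {s : 𝔻} (hc : Summable fun n => ‖c n * conj (s : ℂ) ^ n‖)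
    (hd : Summable fun n => ‖d n * conj (s : ℂ) ^ n‖) :
    conjSeries c s * conjSeries d s =
      conjSeries (fun n => ∑ p ∈ antidiagonal n, c p.1 * d p.2) s := by
  rw [conjSeries, conjSeries, conjSeries,
    tsum_mul_tsum_eq_tsum_sum_antidiagonal_of_summable_norm hc hd]
  refine tsum_congr fun n => ?_
  rw [sum_mul]
  refine sum_congr rfl fun p hp => ?_
  rw [← mem_antidiagonal.1 hp, pow_add]
  ring

lemma tsum_conjSeries {ι : Type*} {c : ι → ℕ → ℂ} {u : ι → ℝ} {w : ℕ → ℝ} {s : 𝔻}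
    (hu : Summable u) (hw : Summable fun n => w n * ‖(s : ℂ)‖ ^ n)
    (hc : ∀ k n, ‖c k n‖ ≤ u k * w n) :
    ∑' k, conjSeries (c k) s = conjSeries (fun n => ∑' k, c k n) s := by
  have hsummable : Summable (Function.uncurry fun k n => c k n * conj (s : ℂ) ^ n) := by
    refine .of_norm_bounded (summable_mul_of_summable_norm hu.norm hw.norm) fun p => ?_
    rw [Function.uncurry, norm_mul, norm_pow, RCLike.norm_conj, ← mul_assoc]
    gcongr
    exact hc p.1 p.2
  simp only [conjSeries]
  rw [← hsummable.tsum_comm]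
  simp only [tsum_mul_right]

lemma tendsto_sum_range_conjSeries {s : 𝔻} (hc : Summable fun n => ‖c n * conj (s : ℂ) ^ n‖) :
    Tendsto (fun N => ∑ n ∈ range N, c n * conj (s : ℂ) ^ n) atTop (𝓝 (conjSeries c s)) :=
  hc.of_norm.hasSum.tendsto_sum_nat

lemma measurable_conjSeries (hc : ∀ s : 𝔻, Summable fun n => ‖c n * conj (s : ℂ) ^ n‖) :
    Measurable (conjSeries c) :=
  measurable_of_tendsto_metrizable (fun N => by fun_prop)
    (tendsto_pi_nhds.2 fun s => tendsto_sum_range_conjSeries (hc s))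

lemma memLp_mul_conj_pow (z : ℂ) (n : ℕ) (p : ℝ≥0∞) :
    MemLp (fun s : 𝔻 => z * conj (s : ℂ) ^ n) p discArea := by
  refine .of_bound (by fun_prop) ‖z‖ (ae_of_all _ fun s => ?_)
  rw [norm_mul, norm_pow, RCLike.norm_conj]
  exact mul_le_of_le_one_right (norm_nonneg _) (pow_le_one₀ (norm_nonneg _) (norm_coe_lt_one s).le)

lemma integral_norm_sq_sum_mul_conj_pow (c : ℕ → ℂ) (t : Finset ℕ) :
    ∫ s : 𝔻, ‖∑ n ∈ t, c n * conj (s : ℂ) ^ n‖ ^ 2 ∂discArea =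
      ∑ n ∈ t, Real.pi * ‖c n‖ ^ 2 / (n + 1) := by
  rw [integral_norm_sq_sum_of_pairwise fun n => memLp_mul_conj_pow (c n) n 2]
  · refine sum_congr rfl fun n _ => ?_
    simp only [norm_mul, norm_pow, RCLike.norm_conj, mul_pow, ← pow_mul]
    rw [integral_const_mul, integral_norm_pow_discArea]
    push_cast
    field_simp
  · intro n m hnm
    have hrearrange : ∀ s : 𝔻, c n * conj (s : ℂ) ^ n * conj (c m * conj (s : ℂ) ^ m) =
        c n * conj (c m) * ((s : ℂ) ^ m * conj (s : ℂ) ^ n) := fun s => by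
      rw [map_mul, map_pow, Complex.conj_conj]
      ring
    simp_rw [hrearrange]
    rw [integral_const_mul, integral_pow_mul_conj_pow, if_neg hnm.symm, mul_zero]

lemma eLpNorm_two_conjSeries_le {B : ℝ}
    (hc : ∀ s : 𝔻, Summable fun n => ‖c n * conj (s : ℂ) ^ n‖) (hB : 0 ≤ B)
    (hcB : ∀ N, ∑ n ∈ range N, Real.pi * ‖c n‖ ^ 2 / (n + 1) ≤ B ^ 2) :
    eLpNorm (conjSeries c) 2 discArea ≤ ENNReal.ofReal B := by
  have hmem : ∀ N, MemLp (fun s : 𝔻 => ∑ n ∈ range N, c n * conj (s : ℂ) ^ n) 2 discArea :=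
    fun N => memLp_finsetSum _ fun n _ => memLp_mul_conj_pow (c n) n 2
  refine Lp.eLpNorm_le_of_ae_tendsto (.of_forall fun N => ?_) (fun N => (hmem N).1)
    (ae_of_all _ fun s => tendsto_sum_range_conjSeries (hc s))
  rw [(hmem N).eLpNorm_eq_integral_rpow_norm two_ne_zero ENNReal.ofNat_ne_top]
  simp only [ENNReal.toReal_ofNat, Real.rpow_ofNat, integral_norm_sq_sum_mul_conj_pow]
  refine ENNReal.ofReal_le_ofReal ?_
  calc (∑ n ∈ range N, Real.pi * ‖c n‖ ^ 2 / (n + 1)) ^ (2 : ℝ)⁻¹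
      ≤ (B ^ 2) ^ (2 : ℝ)⁻¹ := by gcongr; exact hcB N
    _ = B := Real.pow_rpow_inv_natCast hB two_ne_zero

end ConjSeries

section HankelEstimate

open Finset

/-- The series `∑ₙ wₙ vₙ s̄ⁿ`, where `wₙ` are the Taylor coefficients of `Γ(3/2) (1 - z) ^ (-3/2)`.
It maps `ℓ²` boundedly into `L²(𝔻)`, and products of two such series add up to `besovSeries`. -/
def halfSeries (v : ell2) : 𝔻 → ℂ := conjSeries fun n => gammaRatio (3 / 2) n * v n

/-- The second derivative of `∑ₙ aₙ zⁿ⁺²` at `z = s̄`; its integrability over the disc is the Besov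
condition governing the trace norm of the Hankel matrix `(aᵢ₊ⱼ)`. -/
def besovSeries (a : ℕ → ℂ) : 𝔻 → ℂ := conjSeries fun n => (n + 1) * (n + 2) * a n

lemma gammaRatio_three_halves_le (n : ℕ) : gammaRatio (3 / 2) n ≤ (n + 1) * (n + 2) := by
  refine le_of_sq_le_sq ((sq_gammaRatio_three_halves_le n).trans ?_) (by positivity)
  have hn : (0 : ℝ) ≤ n := n.cast_nonneg
  nlinarith [mul_nonneg hn hn, mul_nonneg (mul_nonneg hn hn) hn, sq_nonneg ((n : ℝ) * n)]

lemma norm_gammaRatio_mul_le {z : ℂ} {C : ℝ} (hz : ‖z‖ ≤ C) (n : ℕ) :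
    ‖(gammaRatio (3 / 2) n : ℂ) * z‖ ≤ gammaRatio (3 / 2) n * C := by
  have hpos := gammaRatio_pos (α := 3 / 2) (by norm_num) n
  rw [norm_mul, Complex.norm_of_nonneg hpos.le]
  gcongr

lemma summable_halfSeries (v : ell2) (s : 𝔻) :
    Summable fun n => ‖(gammaRatio (3 / 2) n : ℂ) * v n * conj (s : ℂ) ^ n‖ := by
  refine summable_norm_mul_conj_pow_of_norm_le (C := ‖v‖) (fun n => ?_) s
  refine (norm_gammaRatio_mul_le (lp.norm_apply_le_norm two_ne_zero v n) n).trans ?_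
  rw [mul_comm]
  gcongr
  exact gammaRatio_three_halves_le n

lemma measurable_halfSeries (v : ell2) : Measurable (halfSeries v) :=
  measurable_conjSeries (summable_halfSeries v)

lemma ell2.sum_norm_sq_le_norm_sq (v : ell2) (t : Finset ℕ) : ∑ n ∈ t, ‖v n‖ ^ 2 ≤ ‖v‖ ^ 2 := by
  simpa using lp.sum_rpow_le_norm_rpow (p := 2) (by simp) v t

lemma eLpNorm_halfSeries_le (v : ell2) :
    eLpNorm (halfSeries v) 2 discArea ≤ ENNReal.ofReal (√Real.pi * ‖v‖) := by
  refine eLpNorm_two_conjSeries_le (summable_halfSeries v) (by positivity) fun N => ?_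
  calc ∑ n ∈ range N, Real.pi * ‖(gammaRatio (3 / 2) n : ℂ) * v n‖ ^ 2 / (n + 1)
      ≤ ∑ n ∈ range N, Real.pi * ‖v n‖ ^ 2 := by
        refine sum_le_sum fun n _ => ?_
        have hn : (0 : ℝ) < n + 1 := by positivity
        rw [div_le_iff₀ hn, norm_mul, mul_pow, Complex.norm_real, Real.norm_eq_abs, sq_abs]
        have := mul_le_mul_of_nonneg_left (sq_gammaRatio_three_halves_le n)
          (by positivity : 0 ≤ Real.pi * ‖v n‖ ^ 2)
        linarith
    _ ≤ Real.pi * ‖v‖ ^ 2 := by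
        rw [← mul_sum]
        gcongr
        exact ell2.sum_norm_sq_le_norm_sq v _
    _ = (√Real.pi * ‖v‖) ^ 2 := by rw [mul_pow, Real.sq_sqrt Real.pi_pos.le]

lemma norm_sum_antidiagonal_gammaRatio_le (x y : ell2) (n : ℕ) :
    ‖∑ p ∈ antidiagonal n, ((gammaRatio (3 / 2) p.1 : ℂ) * x p.1) *
      ((gammaRatio (3 / 2) p.2 : ℂ) * y p.2)‖ ≤
      ‖x‖ * ‖y‖ * (Real.pi / 8 * ((n + 1) * (n + 2))) := by
  rw [← sum_antidiagonal_gammaRatio_three_halves, mul_sum]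
  refine norm_sum_le_of_le _ fun p _ => ?_
  exact (norm_mul_le_of_le
    (norm_gammaRatio_mul_le (lp.norm_apply_le_norm two_ne_zero x p.1) p.1)
    (norm_gammaRatio_mul_le (lp.norm_apply_le_norm two_ne_zero y p.2) p.2)).trans_eq (by ring)

variable {ι : Type*} {a : ℕ → ℂ} {x y : ι → ell2}

lemma summable_mul_apply (hxy : Summable fun k => ‖x k‖ * ‖y k‖) (i j : ℕ) :
    Summable fun k => x k i * y k j := by
  refine .of_norm_bounded hxy fun k => ?_
  rw [norm_mul]
  gcongr <;> exact lp.norm_apply_le_norm two_ne_zero _ _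

lemma tsum_sum_antidiagonal_gammaRatio_mul (hxy : Summable fun k => ‖x k‖ * ‖y k‖)
    (ha : ∀ i j, a (i + j) = ∑' k, x k i * y k j) (n : ℕ) :
    ∑' k, ∑ p ∈ antidiagonal n, ((gammaRatio (3 / 2) p.1 : ℂ) * x k p.1) *
      ((gammaRatio (3 / 2) p.2 : ℂ) * y k p.2) = Real.pi / 8 * ((n + 1) * (n + 2) * a n) := by
  have hsummable : ∀ p : ℕ × ℕ, Summable fun k =>
      ((gammaRatio (3 / 2) p.1 : ℂ) * x k p.1) * ((gammaRatio (3 / 2) p.2 : ℂ) * y k p.2) :=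
    fun p => by
      simpa only [mul_mul_mul_comm] using (summable_mul_apply hxy p.1 p.2).mul_left
        ((gammaRatio (3 / 2) p.1 : ℂ) * gammaRatio (3 / 2) p.2)
  rw [Summable.tsum_finsetSum fun p _ => hsummable p]
  calc ∑ p ∈ antidiagonal n, ∑' k, ((gammaRatio (3 / 2) p.1 : ℂ) * x k p.1) *
        ((gammaRatio (3 / 2) p.2 : ℂ) * y k p.2)
      = ∑ p ∈ antidiagonal n,
          ((gammaRatio (3 / 2) p.1 : ℂ) * gammaRatio (3 / 2) p.2) * a (p.1 + p.2) := by
        refine sum_congr rfl fun p _ => ?_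
        rw [ha, ← tsum_mul_left]
        exact tsum_congr fun k => mul_mul_mul_comm _ _ _ _
    _ = (∑ p ∈ antidiagonal n, gammaRatio (3 / 2) p.1 * gammaRatio (3 / 2) p.2 : ℝ) * a n := by
        push_cast
        rw [sum_mul]
        exact sum_congr rfl fun p hp => by rw [mem_antidiagonal.1 hp]
    _ = Real.pi / 8 * ((n + 1) * (n + 2) * a n) := by
        rw [sum_antidiagonal_gammaRatio_three_halves]
        push_cast
        ring

lemma tsum_halfSeries_mul_halfSeries (hxy : Summable fun k => ‖x k‖ * ‖y k‖)
    (ha : ∀ i j, a (i + j) = ∑' k, x k i * y k j) (s : 𝔻) :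
    ∑' k, halfSeries (x k) s * halfSeries (y k) s = Real.pi / 8 * besovSeries a s := by
  have hw : Summable fun n : ℕ => Real.pi / 8 * ((n + 1) * (n + 2)) * ‖(s : ℂ)‖ ^ n := by
    simpa only [mul_assoc] using
      (summable_add_one_mul_add_two_mul_norm_pow s).mul_left (Real.pi / 8)
  calc ∑' k, halfSeries (x k) s * halfSeries (y k) s
      = ∑' k, conjSeries (fun n => ∑ p ∈ antidiagonal n,
          ((gammaRatio (3 / 2) p.1 : ℂ) * x k p.1) * ((gammaRatio (3 / 2) p.2 : ℂ) * y k p.2)) s :=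
        tsum_congr fun k =>
          conjSeries_mul_conjSeries (summable_halfSeries (x k) s) (summable_halfSeries (y k) s)
    _ = conjSeries (fun n => Real.pi / 8 * ((n + 1) * (n + 2) * a n)) s := by
        rw [tsum_conjSeries hxy hw fun k n => norm_sum_antidiagonal_gammaRatio_le (x k) (y k) n]
        simp only [tsum_sum_antidiagonal_gammaRatio_mul hxy ha]
    _ = Real.pi / 8 * besovSeries a s := by
        simp only [besovSeries, conjSeries, ← tsum_mul_left, mul_assoc]

lemma lintegral_enorm_halfSeries_mul_halfSeries_le (x y : ell2) :
    ∫⁻ s, ‖halfSeries x s * halfSeries y s‖ₑ ∂discArea ≤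
      ENNReal.ofReal (Real.pi * (‖x‖ * ‖y‖)) := by
  calc ∫⁻ s, ‖halfSeries x s * halfSeries y s‖ₑ ∂discArea
      = eLpNorm (halfSeries x • halfSeries y) 1 discArea := eLpNorm_one_eq_lintegral_enorm.symm
    _ ≤ eLpNorm (halfSeries x) 2 discArea * eLpNorm (halfSeries y) 2 discArea :=
        eLpNorm_smul_le_mul_eLpNorm (measurable_halfSeries y).aestronglyMeasurable
          (measurable_halfSeries x).aestronglyMeasurable
    _ ≤ ENNReal.ofReal (√Real.pi * ‖x‖) * ENNReal.ofReal (√Real.pi * ‖y‖) := by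
        gcongr <;> exact eLpNorm_halfSeries_le _
    _ = ENNReal.ofReal (Real.pi * (‖x‖ * ‖y‖)) := by
        rw [← ENNReal.ofReal_mul (by positivity), mul_mul_mul_comm,
          Real.mul_self_sqrt Real.pi_pos.le]

lemma lintegral_enorm_besovSeries_le [Countable ι] (hxy : Summable fun k => ‖x k‖ * ‖y k‖)
    (ha : ∀ i j, a (i + j) = ∑' k, x k i * y k j) :
    ∫⁻ s, ‖besovSeries a s‖ₑ ∂discArea ≤ ENNReal.ofReal (8 * ∑' k, ‖x k‖ * ‖y k‖) := by
  have hbesov : ∀ s, besovSeries a s =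
      ((8 / Real.pi : ℝ) : ℂ) * ∑' k, halfSeries (x k) s * halfSeries (y k) s := fun s => by
    rw [tsum_halfSeries_mul_halfSeries hxy ha]
    push_cast
    have := Complex.ofReal_ne_zero.2 Real.pi_ne_zero
    field_simp
  have hconst : ‖((8 / Real.pi : ℝ) : ℂ)‖ₑ = ENNReal.ofReal (8 / Real.pi) := by
    rw [← ofReal_norm, Complex.norm_of_nonneg (by positivity)]
  calc ∫⁻ s, ‖besovSeries a s‖ₑ ∂discArea
      ≤ ∫⁻ s, ENNReal.ofReal (8 / Real.pi) *
          ∑' k, ‖halfSeries (x k) s * halfSeries (y k) s‖ₑ ∂discArea := by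
        refine lintegral_mono fun s => ?_
        rw [hbesov, enorm_mul, hconst]
        gcongr
        exact enorm_tsum_le_tsum_enorm
    _ = ENNReal.ofReal (8 / Real.pi) *
          ∑' k, ∫⁻ s, ‖halfSeries (x k) s * halfSeries (y k) s‖ₑ ∂discArea := by
        have hmeas : ∀ k, Measurable fun s => ‖halfSeries (x k) s * halfSeries (y k) s‖ₑ :=
          fun k => ((measurable_halfSeries (x k)).mul (measurable_halfSeries (y k))).enorm
        rw [lintegral_const_mul _ (.tsum hmeas),
          lintegral_tsum fun k => (hmeas k).aemeasurable]
    _ ≤ ENNReal.ofReal (8 / Real.pi) * ∑' k, ENNReal.ofReal (Real.pi * (‖x k‖ * ‖y k‖)) := by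
        gcongr with k
        exact lintegral_enorm_halfSeries_mul_halfSeries_le (x k) (y k)
    _ = ENNReal.ofReal (8 * ∑' k, ‖x k‖ * ‖y k‖) := by
        rw [← ENNReal.ofReal_tsum_of_nonneg (fun k => by positivity) (hxy.mul_left _),
          ← ENNReal.ofReal_mul (by positivity), tsum_mul_left, ← mul_assoc,
          div_mul_cancel₀ _ Real.pi_ne_zero]

lemma norm_add_one_mul_add_two (n : ℕ) : ‖((n : ℂ) + 1) * (n + 2)‖ = (n + 1) * (n + 2) := by
  exact_mod_cast Complex.norm_natCast ((n + 1) * (n + 2))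

lemma summable_besovSeries {C : ℝ} (ha : ∀ n, ‖a n‖ ≤ C) (s : 𝔻) :
    Summable fun n : ℕ => ‖((n : ℂ) + 1) * (n + 2) * a n * conj (s : ℂ) ^ n‖ := by
  refine summable_norm_mul_conj_pow_of_norm_le (C := C) (fun n => ?_) s
  rw [norm_mul, norm_add_one_mul_add_two, mul_comm]
  gcongr
  exact ha n

end HankelEstimate

section TraceClassHankel

open Finset

lemma ell2.sum_norm_mul_norm_le (x y : ell2) {σ τ : ℕ → ℕ} (hσ : σ.Injective) (hτ : τ.Injective)
    (t : Finset ℕ) : ∑ m ∈ t, ‖x (σ m)‖ * ‖y (τ m)‖ ≤ ‖x‖ * ‖y‖ := by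
  have hsq : ∀ (v : ell2) {ρ : ℕ → ℕ}, ρ.Injective → √(∑ m ∈ t, ‖v (ρ m)‖ ^ 2) ≤ ‖v‖ :=
    fun v ρ hρ => Real.sqrt_le_iff.2 ⟨norm_nonneg v,
      (sum_map t ⟨ρ, hρ⟩ fun n => ‖v n‖ ^ 2).symm.trans_le (ell2.sum_norm_sq_le_norm_sq v _)⟩
  calc ∑ m ∈ t, ‖x (σ m)‖ * ‖y (τ m)‖
      ≤ √(∑ m ∈ t, ‖x (σ m)‖ ^ 2) * √(∑ m ∈ t, ‖y (τ m)‖ ^ 2) :=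
        Real.sum_mul_le_sqrt_mul_sqrt t _ _
    _ ≤ ‖x‖ * ‖y‖ := by gcongr <;> exact hsq _ ‹_›

lemma IsTraceClass.summable_norm_apply {h : ℕ → ℕ → ℂ} (hh : IsTraceClass h) {σ τ : ℕ → ℕ}
    (hσ : σ.Injective) (hτ : τ.Injective) : Summable fun m => ‖h (σ m) (τ m)‖ := by
  obtain ⟨x, y, hxy, hrep⟩ := hh
  refine summable_of_sum_le (c := ∑' k, ‖x k‖ * ‖y k‖) (fun _ => norm_nonneg _) fun t => ?_
  have hsummable : ∀ m, Summable fun k => ‖x k (σ m)‖ * ‖y k (τ m)‖ := fun m =>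
    .of_nonneg_of_le (fun k => by positivity)
      (fun k => by gcongr <;> exact lp.norm_apply_le_norm two_ne_zero _ _) hxy
  calc ∑ m ∈ t, ‖h (σ m) (τ m)‖
      ≤ ∑ m ∈ t, ∑' k, ‖x k (σ m)‖ * ‖y k (τ m)‖ := by
        refine sum_le_sum fun m _ => ?_
        rw [hrep]
        refine tsum_of_norm_bounded (hsummable m).hasSum fun k => ?_
        rw [norm_mul, RCLike.norm_conj]
    _ = ∑' k, ∑ m ∈ t, ‖x k (σ m)‖ * ‖y k (τ m)‖ :=
        (Summable.tsum_finsetSum fun m _ => hsummable m).symm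
    _ ≤ ∑' k, ‖x k‖ * ‖y k‖ :=
        Summable.tsum_le_tsum (fun k => ell2.sum_norm_mul_norm_le (x k) (y k) hσ hτ t)
          (summable_sum fun m _ => hsummable m) hxy

variable {a : ℕ → ℂ}

lemma IsTraceClass.summable_norm_of_hankel (ha : IsTraceClass fun i j => a (i + j)) :
    Summable fun n => ‖a n‖ := by
  have heven : Summable fun m => ‖a (2 * m)‖ := by
    simpa only [two_mul] using! ha.summable_norm_apply Function.injective_id Function.injective_id
  have hodd : Summable fun m => ‖a (2 * m + 1)‖ := by
    simpa only [two_mul] using! ha.summable_norm_apply Function.injective_id Nat.succ_injective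
  exact (HasSum.even_add_odd (f := fun n => ‖a n‖) heven.hasSum hodd.hasSum).summable

lemma measurable_besovSeries (ha : Summable fun n => ‖a n‖) : Measurable (besovSeries a) :=
  measurable_conjSeries (summable_besovSeries fun n => ha.le_tsum n fun _ _ => norm_nonneg _)

lemma integrable_besovSeries (ha : IsTraceClass fun i j => a (i + j)) :
    Integrable (besovSeries a) discArea := by
  refine ⟨(measurable_besovSeries ha.summable_norm_of_hankel).aestronglyMeasurable, ?_⟩
  obtain ⟨x, y, hxy, hrep⟩ := ha
  simp only [← norm_star (y _)] at hxy
  exact (lintegral_enorm_besovSeries_le hxy hrep).trans_lt ENNReal.ofReal_lt_top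

lemma integral_norm_besovSeries_le (ha : IsTraceClass fun i j => a (i + j)) :
    ∫ s, ‖besovSeries a s‖ ∂discArea ≤ 8 * traceNorm fun i j => a (i + j) := by
  have hmeas := (integrable_besovSeries ha).aestronglyMeasurable
  rw [← div_le_iff₀' (by norm_num)]
  obtain ⟨x, y, hxy, hrep⟩ := ha
  refine le_csInf ⟨_, x, y, hxy, hrep, rfl⟩ ?_
  rintro _ ⟨x, y, hxy, hrep, rfl⟩
  rw [div_le_iff₀' (by norm_num), integral_norm_eq_lintegral_enorm hmeas]
  simp only [← norm_star (y _)] at hxy ⊢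
  exact ENNReal.toReal_le_of_le_ofReal (by positivity) (lintegral_enorm_besovSeries_le hxy hrep)

lemma integral_norm_pow_mul_conj_pow_mul_one_sub_norm_sq_le (n m : ℕ) :
    ∫ s : 𝔻, ‖(s : ℂ) ^ n * conj (s : ℂ) ^ m * ((1 - ‖(s : ℂ)‖ ^ 2 : ℝ) : ℂ)‖ ∂discArea ≤
      4 * Real.pi / ((m + 1) * (m + 2)) := by
  have hint : ∀ N, Integrable (fun s : 𝔻 => ‖(s : ℂ)‖ ^ N) discArea := fun N => by
    simpa using (integrable_pow_mul_conj_pow N 0).norm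
  calc ∫ s : 𝔻, ‖(s : ℂ) ^ n * conj (s : ℂ) ^ m * ((1 - ‖(s : ℂ)‖ ^ 2 : ℝ) : ℂ)‖ ∂discArea
      ≤ ∫ s : 𝔻, (‖(s : ℂ)‖ ^ m - ‖(s : ℂ)‖ ^ (m + 2)) ∂discArea := by
        refine integral_mono_of_nonneg (ae_of_all _ fun _ => norm_nonneg _)
          ((hint m).sub (hint (m + 2))) (ae_of_all _ fun s => ?_)
        have hs := one_sub_norm_sq_pos s
        simp only [norm_mul, norm_pow, RCLike.norm_conj, Complex.norm_of_nonneg hs.le]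
        calc ‖(s : ℂ)‖ ^ n * ‖(s : ℂ)‖ ^ m * (1 - ‖(s : ℂ)‖ ^ 2)
            ≤ 1 * ‖(s : ℂ)‖ ^ m * (1 - ‖(s : ℂ)‖ ^ 2) := by
              gcongr
              exact pow_le_one₀ (norm_nonneg _) (norm_coe_lt_one s).le
          _ = ‖(s : ℂ)‖ ^ m - ‖(s : ℂ)‖ ^ (m + 2) := by ring
    _ = 4 * Real.pi / ((m + 2) * (m + 4)) := by
        rw [integral_sub (hint m) (hint (m + 2)), integral_norm_pow_discArea,
          integral_norm_pow_discArea]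
        push_cast
        field_simp
        ring
    _ ≤ 4 * Real.pi / ((m + 1) * (m + 2)) := by
        rw [mul_comm ((m : ℝ) + 1)]
        gcongr
        norm_num

lemma integrable_pow_mul_conj_pow_mul_one_sub_norm_sq (n m : ℕ) :
    Integrable (fun s : 𝔻 => (s : ℂ) ^ n * conj (s : ℂ) ^ m * ((1 - ‖(s : ℂ)‖ ^ 2 : ℝ) : ℂ))
      discArea := by
  refine integrable_discArea_of_continuous_of_bound (C := 1) (by fun_prop) fun s => ?_
  have hs := one_sub_norm_sq_pos s
  rw [norm_mul, Complex.norm_of_nonneg hs.le]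
  exact mul_le_one₀ (norm_pow_mul_conj_pow_le_one n m s) hs.le
    (sub_le_self _ (sq_nonneg ‖(s : ℂ)‖))

lemma hasSum_integral_besovSeries (ha : Summable fun n => ‖a n‖) (n : ℕ) :
    HasSum (fun m : ℕ => ((m : ℂ) + 1) * (m + 2) * a m *
        ∫ s : 𝔻, (s : ℂ) ^ n * conj (s : ℂ) ^ m * ((1 - ‖(s : ℂ)‖ ^ 2 : ℝ) : ℂ) ∂discArea)
      (∫ s : 𝔻, besovSeries a s * ((1 - ‖(s : ℂ)‖ ^ 2 : ℝ) : ℂ) * (s : ℂ) ^ n ∂discArea) := by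
  have hnorm : ∀ m : ℕ, ∫ s : 𝔻, ‖((m : ℂ) + 1) * (m + 2) * a m *
      ((s : ℂ) ^ n * conj (s : ℂ) ^ m * ((1 - ‖(s : ℂ)‖ ^ 2 : ℝ) : ℂ))‖ ∂discArea ≤
        4 * Real.pi * ‖a m‖ := fun m => by
    simp only [norm_mul (_ * a m)]
    rw [integral_const_mul, norm_mul, norm_add_one_mul_add_two]
    calc _ ≤ (m + 1) * (m + 2) * ‖a m‖ * (4 * Real.pi / ((m + 1) * (m + 2))) := by
          gcongr
          exact integral_norm_pow_mul_conj_pow_mul_one_sub_norm_sq_le n m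
      _ = 4 * Real.pi * ‖a m‖ := by field_simp
  have hseries : ∀ s : 𝔻, besovSeries a s * ((1 - ‖(s : ℂ)‖ ^ 2 : ℝ) : ℂ) * (s : ℂ) ^ n =
      ∑' m : ℕ, ((m : ℂ) + 1) * (m + 2) * a m *
        ((s : ℂ) ^ n * conj (s : ℂ) ^ m * ((1 - ‖(s : ℂ)‖ ^ 2 : ℝ) : ℂ)) := fun s => by
    simp only [besovSeries, conjSeries, ← tsum_mul_right]
    exact tsum_congr fun m => by ring
  have hsum := hasSum_integral_of_summable_integral_norm
    (fun m => (integrable_pow_mul_conj_pow_mul_one_sub_norm_sq n m).const_mul _)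
    (.of_nonneg_of_le (fun m => by positivity) hnorm (ha.mul_left _))
  simp only [integral_const_mul] at hsum
  rwa [← integral_congr_ae (ae_of_all _ fun s => hseries s)] at hsum

lemma integral_besovSeries_mul_one_sub_norm_sq_mul_pow (ha : Summable fun n => ‖a n‖) (n : ℕ) :
    ∫ s : 𝔻, besovSeries a s * ((1 - ‖(s : ℂ)‖ ^ 2 : ℝ) : ℂ) * (s : ℂ) ^ n ∂discArea =
      Real.pi * a n := by
  have h₁ : (n : ℂ) + 1 ≠ 0 := n.cast_add_one_ne_zero
  have h₂ : (n : ℂ) + 2 ≠ 0 := by exact_mod_cast (n + 1).succ_ne_zero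
  rw [← (hasSum_integral_besovSeries ha n).tsum_eq, tsum_eq_single n fun m hm => ?_,
    integral_pow_mul_conj_pow_mul_one_sub_norm_sq, if_pos rfl]
  · field_simp
  · rw [integral_pow_mul_conj_pow_mul_one_sub_norm_sq, if_neg hm.symm, mul_zero]

end TraceClassHankel

section PolarDecomposition

variable {α E F : Type*} [MeasurableSpace α] {μ : Measure α} [NormedAddCommGroup E]
  [NormedSpace ℝ E] [NormedAddCommGroup F] [MeasurableSpace F] [OpensMeasurableSpace F]

lemma integral_withDensity_enorm {g : α → F} (hg : Measurable g) (φ : α → E) :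
    ∫ x, φ x ∂μ.withDensity (fun x => ‖g x‖ₑ) = ∫ x, ‖g x‖ • φ x ∂μ :=
  integral_withDensity_eq_integral_smul hg.nnnorm φ

lemma integrable_withDensity_enorm_iff {g : α → F} (hg : Measurable g) {φ : α → E} :
    Integrable φ (μ.withDensity fun x => ‖g x‖ₑ) ↔ Integrable (fun x => ‖g x‖ • φ x) μ :=
  integrable_withDensity_iff_integrable_smul hg.nnnorm

lemma integral_exp_arg_mul_withDensity_enorm {g : α → ℂ} (hg : Measurable g) (φ : α → ℂ) :
    ∫ x, Complex.exp ((g x).arg * Complex.I) * φ x ∂μ.withDensity (fun x => ‖g x‖ₑ) =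
      ∫ x, g x * φ x ∂μ := by
  simp only [integral_withDensity_enorm hg, Complex.real_smul, ← mul_assoc,
    Complex.norm_mul_exp_arg_mul_I]

end PolarDecomposition

section Moments

variable {ρ : Measure 𝔻} {g : 𝔻 → ℂ}

lemma norm_coe_pow_le_one (s : 𝔻) (n : ℕ) : ‖(s : ℂ) ^ n‖ ≤ 1 := by
  rw [norm_pow]
  exact pow_le_one₀ (norm_nonneg _) (norm_coe_lt_one s).le

lemma integrable_mul_pow (hg : Integrable g ρ) (n : ℕ) :
    Integrable (fun s => g s * (s : ℂ) ^ n) ρ :=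
  hg.mul_bdd (c := 1) (Continuous.aestronglyMeasurable (by fun_prop))
    (ae_of_all _ fun s => norm_coe_pow_le_one s n)

lemma tendsto_integral_mul_pow (hg : Integrable g ρ) :
    Tendsto (fun n => ∫ s, g s * (s : ℂ) ^ n ∂ρ) atTop (𝓝 0) := by
  suffices Tendsto (fun n => ∫ s, g s * (s : ℂ) ^ n ∂ρ) atTop (𝓝 (∫ _, 0 ∂ρ)) by
    rwa [integral_zero] at this
  refine tendsto_integral_of_dominated_convergence (fun s => ‖g s‖)
    (fun n => (integrable_mul_pow hg n).aestronglyMeasurable) hg.norm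
    (fun n => ae_of_all _ fun s => ?_) (ae_of_all _ fun s => ?_)
  · rw [norm_mul]
    exact mul_le_of_le_one_right (norm_nonneg _) (norm_coe_pow_le_one s n)
  · simpa only [mul_zero] using
      (tendsto_pow_atTop_nhds_zero_of_norm_lt_one (norm_coe_lt_one s)).const_mul (g s)

lemma integral_mul_pow_sub_integral_mul_pow_add_two (hg : Integrable g ρ) (n : ℕ) :
    ∫ s, g s * (s : ℂ) ^ n ∂ρ - ∫ s, g s * (s : ℂ) ^ (n + 2) ∂ρ =
      ∫ s, g s * (1 - (s : ℂ) ^ 2) * (s : ℂ) ^ n ∂ρ := by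
  rw [← integral_sub (integrable_mul_pow hg n) (integrable_mul_pow hg (n + 2))]
  exact integral_congr_ae (ae_of_all _ fun s => by ring)

end Moments

section MomentDensity

/-- The weight `|1 - s²| / (1 - |s|²)` against which the representing measure is integrated. -/
def discWeight (s : ℂ) : ℝ := ‖1 - s ^ 2‖ / (1 - ‖s‖ ^ 2)

lemma one_sub_norm_sq_le_norm_one_sub_sq (s : ℂ) : 1 - ‖s‖ ^ 2 ≤ ‖1 - s ^ 2‖ := by
  rw [← norm_pow, ← norm_one (α := ℂ)]
  exact norm_sub_norm_le 1 (s ^ 2)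

lemma one_sub_sq_ne_zero (s : 𝔻) : 1 - (s : ℂ) ^ 2 ≠ 0 :=
  norm_pos_iff.1 ((one_sub_norm_sq_pos s).trans_le (one_sub_norm_sq_le_norm_one_sub_sq s))

lemma one_le_discWeight (s : 𝔻) : 1 ≤ discWeight s :=
  (one_le_div (one_sub_norm_sq_pos s)).2 (one_sub_norm_sq_le_norm_one_sub_sq s)

/-- The density with respect to area of a measure on the disc whose moments `Mₙ` satisfy
`Mₙ - Mₙ₊₂ = aₙ`. -/
def momentDensity (a : ℕ → ℂ) (s : 𝔻) : ℂ :=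
  besovSeries a s * ((1 - ‖(s : ℂ)‖ ^ 2 : ℝ) : ℂ) / (Real.pi * (1 - (s : ℂ) ^ 2))

variable {a : ℕ → ℂ}

lemma norm_momentDensity_mul_discWeight (a : ℕ → ℂ) (s : 𝔻) :
    ‖momentDensity a s‖ * discWeight s = ‖besovSeries a s‖ / Real.pi := by
  have hs := one_sub_norm_sq_pos s
  have hs' := norm_ne_zero_iff.2 (one_sub_sq_ne_zero s)
  rw [momentDensity, discWeight, norm_div, norm_mul, norm_mul, Complex.norm_of_nonneg hs.le,
    Complex.norm_of_nonneg Real.pi_pos.le]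
  field_simp [hs.ne']

lemma measurable_momentDensity (ha : Summable fun n => ‖a n‖) :
    Measurable (momentDensity a) := by
  refine ((measurable_besovSeries ha).mul ?_).div ?_ <;>
    exact Continuous.measurable (by fun_prop)

lemma integrable_momentDensity (ha : IsTraceClass fun i j => a (i + j)) :
    Integrable (momentDensity a) discArea := by
  refine ((integrable_besovSeries ha).norm.div_const Real.pi).mono'
    (measurable_momentDensity ha.summable_norm_of_hankel).aestronglyMeasurable
    (ae_of_all _ fun s => ?_)
  rw [← norm_momentDensity_mul_discWeight]
  exact le_mul_of_one_le_right (norm_nonneg _) (one_le_discWeight s)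

lemma integral_momentDensity_mul_pow_sub (ha : IsTraceClass fun i j => a (i + j)) (n : ℕ) :
    ∫ s : 𝔻, momentDensity a s * (s : ℂ) ^ n ∂discArea -
      ∫ s : 𝔻, momentDensity a s * (s : ℂ) ^ (n + 2) ∂discArea = a n := by
  have hdensity : ∀ s : 𝔻, momentDensity a s * (1 - (s : ℂ) ^ 2) * (s : ℂ) ^ n =
      besovSeries a s * ((1 - ‖(s : ℂ)‖ ^ 2 : ℝ) : ℂ) * (s : ℂ) ^ n / Real.pi := fun s => by
    have hs := one_sub_sq_ne_zero s
    rw [momentDensity]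
    field_simp
  rw [integral_mul_pow_sub_integral_mul_pow_add_two (integrable_momentDensity ha)]
  simp_rw [hdensity]
  rw [integral_div, integral_besovSeries_mul_one_sub_norm_sq_mul_pow ha.summable_norm_of_hankel,
    mul_div_cancel_left₀ _ (Complex.ofReal_ne_zero.2 Real.pi_ne_zero)]

lemma integrable_norm_momentDensity_smul_discWeight (ha : IsTraceClass fun i j => a (i + j)) :
    Integrable (fun s : 𝔻 => ‖momentDensity a s‖ • discWeight s) discArea := by
  simp only [smul_eq_mul, norm_momentDensity_mul_discWeight]
  exact (integrable_besovSeries ha).norm.div_const _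

lemma integral_norm_momentDensity_smul_discWeight_le (ha : IsTraceClass fun i j => a (i + j)) :
    ∫ s : 𝔻, ‖momentDensity a s‖ • discWeight s ∂discArea ≤
      8 / Real.pi * traceNorm fun i j => a (i + j) := by
  simp only [smul_eq_mul, norm_momentDensity_mul_discWeight]
  rw [integral_div, div_mul_eq_mul_div]
  gcongr
  exact integral_norm_besovSeries_le ha

end MomentDensity

lemma eq_cOne_add_cTwo_add_of_tendsto_zero {φ M : ℕ → ℂ} (hM : Tendsto M atTop (𝓝 0))
    (hφM : ∀ n, M n - M (n + 2) = φ n - φ (n + 2)) (n : ℕ) :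
    φ n = cOne φ + (-1) ^ n * cTwo φ + M n := by
  have hperiodic : Function.Periodic (φ - M) 2 := fun n => by
    simp only [Pi.sub_apply]
    linear_combination hφM n
  have hlim : ∀ r, limUnder atTop (fun n => φ (2 * n + r)) = φ r - M r := fun r => by
    have hindex : Tendsto (fun n => 2 * n + r) atTop atTop :=
      tendsto_atTop_mono (fun n => show n ≤ 2 * n + r by lia) tendsto_id
    have hconst : ∀ n, φ r - M r + M (2 * n + r) = φ (2 * n + r) := fun n => by
      have := hperiodic.nat_mul n r
      simp only [Pi.sub_apply, Nat.cast_id, add_comm r, mul_comm n] at this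
      linear_combination -this
    have htendsto := (hM.comp hindex).const_add (φ r - M r)
    simp only [Function.comp_apply, hconst, add_zero] at htendsto
    exact htendsto.limUnder_eq
  have hmod : φ n - M n = φ (n % 2) - M (n % 2) := (hperiodic.map_mod_nat n).symm
  have hlim₀ : limUnder atTop (fun n => φ (2 * n)) = φ 0 - M 0 := hlim 0
  rw [← sub_eq_iff_eq_add, hmod, cOne, cTwo, hlim 1, hlim₀]
  rcases Nat.mod_two_eq_zero_or_one n with h | h
  · rw [h, (Nat.even_iff.2 h).neg_one_pow]
    ring
  · rw [h, (Nat.odd_iff.2 h).neg_one_pow]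
    ring

theorem MemCp.exists_moment_representation {ψ : ℕ → ℂ} (hψ : MemCp ψ) :
    ∃ (cp cm : ℂ) (ρ : Measure 𝔻) (f : 𝔻 → ℂ), IsFiniteMeasure ρ ∧ AEStronglyMeasurable f ρ ∧
      (∀ᵐ s ∂ρ, ‖f s‖ = 1) ∧
      (∀ n : ℕ, ψ n = cp + (-1 : ℂ) ^ n * cm + ∫ s, f s * (s : ℂ) ^ n ∂ρ) ∧
      Integrable (fun s : 𝔻 => discWeight s) ρ ∧
      ‖cp‖ + ‖cm‖ + ∫ s : 𝔻, discWeight s ∂ρ ≤ 8 / Real.pi * CpNorm ψ := by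
  have ha : IsTraceClass fun i j => (fun n => ψ n - ψ (n + 2)) (i + j) := hψ
  set g : 𝔻 → ℂ := momentDensity fun n => ψ n - ψ (n + 2)
  have hmeas : Measurable g := measurable_momentDensity ha.summable_norm_of_hankel
  have hint : Integrable g discArea := integrable_momentDensity ha
  have hpi : 1 ≤ 8 / Real.pi := (one_le_div Real.pi_pos).2 (by linarith [Real.pi_le_four])
  refine ⟨cOne ψ, cTwo ψ, discArea.withDensity fun s => ‖g s‖ₑ,
    fun s => Complex.exp ((g s).arg * Complex.I), isFiniteMeasure_withDensity hint.2.ne, ?_,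
    ae_of_all _ fun s => Complex.norm_exp_ofReal_mul_I _, fun n => ?_,
    (integrable_withDensity_enorm_iff hmeas).2
      (integrable_norm_momentDensity_smul_discWeight ha), ?_⟩
  · exact Measurable.aestronglyMeasurable (by fun_prop)
  · rw [integral_exp_arg_mul_withDensity_enorm hmeas]
    exact eq_cOne_add_cTwo_add_of_tendsto_zero (tendsto_integral_mul_pow hint)
      (integral_momentDensity_mul_pow_sub ha) n
  · rw [integral_withDensity_enorm hmeas, CpNorm, mul_add]
    exact add_le_add (le_mul_of_one_le_left (by positivity) hpi)
      (integral_norm_momentDensity_smul_discWeight_le ha)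

section GramMatrix

lemma ell2.norm_sq_eq_tsum (x : ell2) : ‖x‖ ^ 2 = ∑' i, ‖x i‖ ^ 2 := by
  simpa using lp.norm_rpow_eq_tsum (p := 2) (by simp) x

lemma IsTraceClass.of_hasSum {ι : Type*} {h : ℕ → ℕ → ℂ} {u v : ι → ell2}
    (huv : Summable fun k => ‖u k‖ * ‖v k‖)
    (hh : ∀ i j, HasSum (fun k => u k i * conj (v k j)) (h i j)) : IsTraceClass h := by
  have hcountable := huv.countable_support.to_subtype
  obtain ⟨e, he⟩ := exists_injective_nat (Function.support fun k => ‖u k‖ * ‖v k‖)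
  have hext : ∀ n ∉ Set.range e, Function.extend e (fun k => u k) 0 n = 0 := fun n hn =>
    Function.extend_apply' _ _ n hn
  refine ⟨Function.extend e (fun k => u k) 0, Function.extend e (fun k => v k) 0,
    (he.summable_iff fun n hn => ?_).1 ?_,
    fun i j => ((he.hasSum_iff fun n hn => ?_).1 ?_).tsum_eq.symm⟩
  · rw [hext n hn, norm_zero, zero_mul]
  · simpa only [Function.comp_def, he.extend_apply] using huv.subtype _
  · rw [hext n hn, lp.coeFn_zero, Pi.zero_apply, zero_mul]
  · simp only [Function.comp_def, he.extend_apply]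
    refine (hasSum_subtype_iff_of_support_subset fun k hk => ?_).2 (hh i j)
    contrapose! hk
    rcases mul_eq_zero.1 (Function.notMem_support.1 hk) with hu | hv
    · simp [norm_eq_zero.1 hu]
    · simp [norm_eq_zero.1 hv]

variable {E : Type*} [NormedAddCommGroup E] [InnerProductSpace ℂ E]

lemma exists_ell2_apply_eq_inner {ι : Type*} {e : ι → E} (he : Orthonormal ℂ e)
    {a : ℕ → E} (ha : Summable fun i => ‖a i‖ ^ 2) :
    ∃ u : ι → ell2, (∀ k i, u k i = inner ℂ (a i) (e k)) ∧ Summable fun k => ‖u k‖ ^ 2 := by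
  have hbessel : ∀ i, Summable fun k => ‖inner ℂ (a i) (e k)‖ ^ 2 := fun i => by
    simpa only [norm_inner_symm (a i)] using he.inner_products_summable (a i)
  have hbessel_le : ∀ i, ∑' k, ‖inner ℂ (a i) (e k)‖ ^ 2 ≤ ‖a i‖ ^ 2 := fun i => by
    simpa only [norm_inner_symm (a i)] using he.tsum_inner_products_le (a i)
  have hdouble : Summable fun p : ι × ℕ => ‖inner ℂ (a p.2) (e p.1)‖ ^ 2 :=
    ((summable_prod_of_nonneg (f := fun p : ℕ × ι => ‖inner ℂ (a p.1) (e p.2)‖ ^ 2)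
      fun _ => sq_nonneg _).2 ⟨hbessel, .of_nonneg_of_le (fun _ => tsum_nonneg fun _ => sq_nonneg _)
        hbessel_le ha⟩).prod_symm
  refine ⟨fun k => ⟨fun i => inner ℂ (a i) (e k), memℓp_gen ?_⟩, fun _ _ => rfl, ?_⟩
  · simpa using hdouble.prod_factor k
  · simpa only [ell2.norm_sq_eq_tsum] using hdouble.prod

lemma IsTraceClass.of_inner [CompleteSpace E] {a b : ℕ → E} (ha : Summable fun i => ‖a i‖ ^ 2)
    (hb : Summable fun j => ‖b j‖ ^ 2) : IsTraceClass fun i j => inner ℂ (a i) (b j) := by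
  obtain ⟨ι, e, -⟩ := exists_hilbertBasis ℂ E
  obtain ⟨u, hu, hu_sq⟩ := exists_ell2_apply_eq_inner e.orthonormal ha
  obtain ⟨v, hv, hv_sq⟩ := exists_ell2_apply_eq_inner e.orthonormal hb
  refine .of_hasSum (u := u) (v := v) (.of_nonneg_of_le (fun k => by positivity) (fun k => ?_)
    (hu_sq.add hv_sq)) fun i j => ?_
  · nlinarith [sq_nonneg (‖u k‖ - ‖v k‖)]
  · simpa only [hu, hv, inner_conj_symm] using e.hasSum_inner_mul_inner (a i) (b j)

variable {α : Type*} [MeasurableSpace α] {μ : Measure α}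

lemma norm_sq_toLp_two {F : α → ℂ} (hF : MemLp F 2 μ) :
    ‖hF.toLp F‖ ^ 2 = ∫ x, ‖F x‖ ^ 2 ∂μ := by
  rw [Lp.norm_toLp, hF.eLpNorm_eq_integral_rpow_norm two_ne_zero ENNReal.ofNat_ne_top,
    ENNReal.toReal_ofReal (by positivity)]
  simpa using Real.rpow_inv_natCast_pow (n := 2)
    (integral_nonneg fun x => sq_nonneg ‖F x‖ : 0 ≤ ∫ x, ‖F x‖ ^ 2 ∂μ) two_ne_zero

lemma IsTraceClass.of_integral_mul {F G : ℕ → α → ℂ} (hF : ∀ i, MemLp (F i) 2 μ)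
    (hG : ∀ j, MemLp (G j) 2 μ) (hF_sq : Summable fun i => ∫ x, ‖F i x‖ ^ 2 ∂μ)
    (hG_sq : Summable fun j => ∫ x, ‖G j x‖ ^ 2 ∂μ) :
    IsTraceClass fun i j => ∫ x, F i x * G j x ∂μ := by
  have hinner : ∀ i j, ∫ x, F i x * G j x ∂μ =
      inner ℂ ((hF i).star.toLp (star (F i))) ((hG j).toLp (G j)) := fun i j => by
    rw [L2.inner_def]
    refine integral_congr_ae ?_
    filter_upwards [(hF i).star.coeFn_toLp, (hG j).coeFn_toLp] with x hFx hGx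
    rw [hFx, hGx, RCLike.inner_apply, Pi.star_apply, RCLike.star_def, RCLike.conj_conj, mul_comm]
  simp only [hinner]
  refine .of_inner ?_ ?_
  · simpa only [norm_sq_toLp_two, Pi.star_apply, norm_star] using hF_sq
  · simpa only [norm_sq_toLp_two] using hG_sq

end GramMatrix

section MomentHankel

variable {ρ : Measure 𝔻} {h : 𝔻 → ℂ}

lemma sum_range_norm_pow_sq_le (s : 𝔻) (N : ℕ) :
    ∑ i ∈ Finset.range N, ‖(s : ℂ) ^ i‖ ^ 2 ≤ (1 - ‖(s : ℂ)‖ ^ 2)⁻¹ := by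
  have hs := one_sub_norm_sq_pos s
  simp only [norm_pow, ← pow_mul, mul_comm _ 2]
  simp only [pow_mul]
  rw [← tsum_geometric_of_lt_one (sq_nonneg _) (sub_pos.1 hs)]
  exact (summable_geometric_of_lt_one (sq_nonneg _) (sub_pos.1 hs)).sum_le_tsum _
    fun _ _ => by positivity

lemma memLp_two_mul_pow {w : 𝔻 → ℂ} (hw : MemLp w 2 ρ) (i : ℕ) :
    MemLp (fun s => w s * (s : ℂ) ^ i) 2 ρ := by
  refine hw.of_le (hw.1.mul (Continuous.aestronglyMeasurable (by fun_prop)))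
    (ae_of_all _ fun s => ?_)
  rw [norm_mul]
  exact mul_le_of_le_one_right (norm_nonneg _) (norm_coe_pow_le_one s i)

lemma summable_integral_norm_sq_mul_pow {w : 𝔻 → ℂ} (hw : MemLp w 2 ρ)
    (hint : Integrable (fun s : 𝔻 => ‖w s‖ ^ 2 / (1 - ‖(s : ℂ)‖ ^ 2)) ρ) :
    Summable fun i : ℕ => ∫ s, ‖w s * (s : ℂ) ^ i‖ ^ 2 ∂ρ := by
  have hint_pow : ∀ i, Integrable (fun s => ‖w s * (s : ℂ) ^ i‖ ^ 2) ρ := fun i =>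
    (memLp_two_iff_integrable_sq_norm (memLp_two_mul_pow hw i).1).1 (memLp_two_mul_pow hw i)
  refine summable_of_sum_range_le (fun i => integral_nonneg fun s => sq_nonneg _)
    (c := ∫ s, ‖w s‖ ^ 2 / (1 - ‖(s : ℂ)‖ ^ 2) ∂ρ) fun N => ?_
  rw [← integral_finsetSum _ fun i _ => hint_pow i]
  refine integral_mono (integrable_finsetSum _ fun i _ => hint_pow i) hint fun s => ?_
  simp only [norm_mul, mul_pow, ← Finset.mul_sum, div_eq_mul_inv]
  gcongr
  exact sum_range_norm_pow_sq_le s N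

lemma IsTraceClass.of_integral_mul_pow (hh : AEStronglyMeasurable h ρ)
    (hint : Integrable (fun s : 𝔻 => ‖h s‖ / (1 - ‖(s : ℂ)‖ ^ 2)) ρ) :
    IsTraceClass fun i j => ∫ s, h s * (s : ℂ) ^ (i + j) ∂ρ := by
  set w : 𝔻 → ℂ := fun s => h s ^ ((2 : ℕ) : ℂ)⁻¹
  have hw_sq : ∀ s, w s ^ 2 = h s := fun s => Complex.cpow_nat_inv_pow _ two_ne_zero
  have hw_norm : ∀ s, ‖w s‖ ^ 2 = ‖h s‖ := fun s => by rw [← norm_pow, hw_sq]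
  have hw_meas : AEStronglyMeasurable w ρ := (hh.aemeasurable.pow_const _).aestronglyMeasurable
  have hw : MemLp w 2 ρ := by
    rw [memLp_two_iff_integrable_sq_norm hw_meas]
    refine hint.mono' (hw_meas.norm.pow 2) (ae_of_all _ fun s => ?_)
    rw [Real.norm_of_nonneg (sq_nonneg _), hw_norm]
    exact le_div_self (norm_nonneg _) (one_sub_norm_sq_pos s) (sub_le_self _ (sq_nonneg _))
  have hsum := summable_integral_norm_sq_mul_pow hw (by simpa only [hw_norm] using hint)
  have hfactor : ∀ i j (s : 𝔻), h s * (s : ℂ) ^ (i + j) = w s * (s : ℂ) ^ i * (w s * (s : ℂ) ^ j) :=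
    fun i j s => by rw [← hw_sq]; ring
  simp only [hfactor]
  exact .of_integral_mul (memLp_two_mul_pow hw) (memLp_two_mul_pow hw) hsum hsum

theorem MemCp.of_moment_representation [IsFiniteMeasure ρ] {ψ : ℕ → ℂ} {cp cm : ℂ} {f : 𝔻 → ℂ}
    (hf : AEStronglyMeasurable f ρ) (hf_norm : ∀ᵐ s ∂ρ, ‖f s‖ = 1)
    (hψ : ∀ n : ℕ, ψ n = cp + (-1 : ℂ) ^ n * cm + ∫ s, f s * (s : ℂ) ^ n ∂ρ)
    (hint : Integrable (fun s : 𝔻 => discWeight s) ρ) : MemCp ψ := by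
  have hf_int : Integrable f ρ := .of_bound hf 1 (hf_norm.mono fun s hs => hs.le)
  have hankel : hankelHat ψ = fun i j => ∫ s, f s * (1 - (s : ℂ) ^ 2) * (s : ℂ) ^ (i + j) ∂ρ := by
    ext i j
    rw [← integral_mul_pow_sub_integral_mul_pow_add_two hf_int, hankelHat, hψ, hψ, pow_add _ _ 2,
      neg_one_sq, mul_one]
    ring
  rw [MemCp, hankel]
  refine .of_integral_mul_pow (hf.mul (Continuous.aestronglyMeasurable (by fun_prop)))
    (hint.congr (hf_norm.mono fun s hs => ?_))
  simp only [norm_mul, hs, one_mul, discWeight]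

end MomentHankel

/-- `ψ ∈ 𝒞′` if and only if there are a complex Borel measure `μ` on the open
unit disc (written in polar form `μ = f · ρ` with `ρ = |μ|` a finite Borel measure and `‖f‖ = 1`
a.e.) and constants `c₊, c₋ ∈ ℂ` such that `ψ(n) = c₊ + (−1)ⁿ c₋ + ∫_𝔻 sⁿ dμ(s)` for all `n` and
`∫_𝔻 |1−s²|/(1−|s|²) d|μ|(s) < ∞`. Moreover, for `ψ ∈ 𝒞′` the data can be chosen so that
`|c₊| + |c₋| + ∫_𝔻 |1−s²|/(1−|s|²) d|μ|(s) ≤ (8/π)·‖ψ‖_{𝒞′}`. -/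
theorem stmt3 (ψ : ℕ → ℂ) :
    (MemCp ψ ↔
      ∃ (cp cm : ℂ) (ρ : Measure (Metric.ball (0:ℂ) 1)) (f : Metric.ball (0:ℂ) 1 → ℂ),
        IsFiniteMeasure ρ ∧
        AEStronglyMeasurable f ρ ∧
        (∀ᵐ s ∂ρ, ‖f s‖ = 1) ∧
        (∀ n : ℕ, ψ n = cp + (-1 : ℂ) ^ n * cm + ∫ s, f s * (s : ℂ) ^ n ∂ρ) ∧
        Integrable
          (fun s : Metric.ball (0:ℂ) 1 => ‖1 - (s : ℂ) ^ 2‖ / (1 - ‖(s : ℂ)‖ ^ 2)) ρ) ∧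
    (MemCp ψ →
      ∃ (cp cm : ℂ) (ρ : Measure (Metric.ball (0:ℂ) 1)) (f : Metric.ball (0:ℂ) 1 → ℂ),
        IsFiniteMeasure ρ ∧
        AEStronglyMeasurable f ρ ∧
        (∀ᵐ s ∂ρ, ‖f s‖ = 1) ∧
        (∀ n : ℕ, ψ n = cp + (-1 : ℂ) ^ n * cm + ∫ s, f s * (s : ℂ) ^ n ∂ρ) ∧
        Integrable
          (fun s : Metric.ball (0:ℂ) 1 => ‖1 - (s : ℂ) ^ 2‖ / (1 - ‖(s : ℂ)‖ ^ 2)) ρ ∧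
        ‖cp‖ + ‖cm‖ + ∫ s, ‖1 - (s : ℂ) ^ 2‖ / (1 - ‖(s : ℂ)‖ ^ 2) ∂ρ ≤
          (8 / Real.pi) * CpNorm ψ) := by
  refine ⟨⟨fun hψ => ?_, ?_⟩, MemCp.exists_moment_representation⟩
  · obtain ⟨cp, cm, ρ, f, hρ, hf, hf_norm, hmoments, hint, -⟩ := hψ.exists_moment_representation
    exact ⟨cp, cm, ρ, f, hρ, hf, hf_norm, hmoments, hint⟩
  · rintro ⟨cp, cm, ρ, f, hρ, hf, hf_norm, hmoments, hint⟩
    exact .of_moment_representation hf hf_norm hmoments hint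

end
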